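/- There exists a universal constant c > 0 such that for every σ-finite Borel measure μ on ℝ² with μ p_s < ∞ for all s > 0, every t > 0 and every x ∈ ℝ², one has (μ * q_t)(x₁, x₂) / |log |r|| → c · (μ * p_t)(x) as x₁, x₂ → x with x₁ ≠ x₂, where r = (x₁ - x₂)/2. -/

import Mathlib

open Filter MeasureTheory

/-- The standard Gaussian density `p_t(x) = (2πt)^{-d/2} exp(-|x|²/(2t))` on `ℝ^d`. -/
noncomputable def gaussDensity (d : ℕ) (t : ℝ) (x : EuclideanSpace ℝ (Fin d)) : ℝ :=
  (2 * Real.pi * t) ^ (-(d : ℝ) / 2) * Real.exp (-‖x‖ ^ 2 / (2 * t))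

/-- The covariance density
`q_t(x₁, x₂) = 2 ∫₀^t ∫ p_s(u) p_{t-s}(x₁ - u) p_{t-s}(x₂ - u) du ds`. -/
noncomputable def gaussQ (d : ℕ) (t : ℝ) (x₁ x₂ : EuclideanSpace ℝ (Fin d)) : ℝ :=
  2 * ∫ s in Set.Ioc (0:ℝ) t,
      ∫ u, gaussDensity d s u * gaussDensity d (t - s) (x₁ - u)
        * gaussDensity d (t - s) (x₂ - u) ∂volume

open scoped Topology

/-!
Completing the square gives, in every dimension,
`q_t(x₁, x₂) = 2 ∫₀ᵗ p_{2a}(x₁ - x₂) p_{t-a/2}((x₁ + x₂)/2) da`.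
In the plane, with `ρ = |r|²`, the first factor is `2 p_{2a}(x₁ - x₂) = exp (-ρ/a) / (2πa)`.
Substituting `a = ρ ^ v` turns `da/a` into `|log ρ| dv` and the exponential into
`exp (-ρ ^ (1 - v))`, which tends to the indicator of `v < 1` as `ρ → 0`. The constraint `a ≤ t`
becomes `0 < v` in the limit, and there `a = ρ ^ v → 0`. So the integral over `a`, divided by
`|log ρ| = 2 |log |r||`, converges by dominated convergence to `(2π)⁻¹ p_t(x)`, the second factor
being evaluated at `a = 0`. A second dominated convergence integrates this against `μ`; the
majorant is a multiple of `p_s` with `s > t`, which absorbs the moving centre `(x₁ + x₂)/2`.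
-/

section LogAverage

open Real Set

variable {E : Type*} [NormedAddCommGroup E] [NormedSpace ℝ E] {t ρ M : ℝ} {f : ℝ → E}

lemma setIntegral_Ioi_inv_smul_eq_smul_integral_comp_rpow (hρ : 0 < ρ) (hρ₁ : ρ ≠ 1) (g : ℝ → E) :
    ∫ a in Ioi 0, a⁻¹ • g a = |log ρ| • ∫ v : ℝ, g (ρ ^ v) := by
  have hlog : log ρ ≠ 0 := log_ne_zero_of_pos_of_ne_one hρ hρ₁
  have himage : (fun v : ℝ ↦ ρ ^ v) '' univ = Ioi 0 := by
    refine Subset.antisymm (image_subset_iff.2 fun v _ ↦ rpow_pos_of_pos hρ v) fun a ha ↦ ?_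
    exact ⟨logb ρ a, mem_univ _, rpow_logb hρ hρ₁ ha⟩
  have hinj : InjOn (fun v : ℝ ↦ ρ ^ v) univ := fun v _ w _ h ↦ (rpow_right_inj hρ hρ₁).1 h
  rw [← himage, integral_image_eq_integral_abs_deriv_smul MeasurableSet.univ
    (fun v _ ↦ (hasStrictDerivAt_const_rpow hρ v).hasDerivAt.hasDerivWithinAt) hinj,
    setIntegral_univ, ← integral_smul]
  refine integral_congr_ae (ae_of_all _ fun v ↦ ?_)
  have hv : 0 < ρ ^ v := rpow_pos_of_pos hρ v
  simp only [abs_mul, abs_of_pos hv, smul_smul]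
  congr 1
  field_simp

/-- The average of `f` over `(0, t]` against the kernel `a⁻¹ exp (-ρ / a)`, whose mass is asymptotic
to `|log ρ|` as `ρ → 0`; it is normalised by `|log ρ|`, so it has total weight one only in the
limit. -/
noncomputable def logAverage (t ρ : ℝ) (f : ℝ → E) : E :=
  |log ρ|⁻¹ • ∫ a in Ioc 0 t, (a⁻¹ * exp (-ρ / a)) • f a

/-- The integrand of `logAverage t ρ f` in the variable `v` with `a = ρ ^ v`, cut off at
`ρ ^ v ≤ t`. -/
noncomputable def logIntegrand (t ρ : ℝ) (f : ℝ → E) (v : ℝ) : E :=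
  (Iic t).indicator (fun a ↦ exp (-ρ / a) • f a) (ρ ^ v)

lemma logAverage_eq_integral_logIntegrand (hρ : 0 < ρ) (hρ₁ : ρ ≠ 1) (t : ℝ) (f : ℝ → E) :
    logAverage t ρ f = ∫ v, logIntegrand t ρ f v := by
  have hlog : |log ρ| ≠ 0 := abs_ne_zero.2 (log_ne_zero_of_pos_of_ne_one hρ hρ₁)
  rw [logAverage, inv_smul_eq_iff₀ hlog]
  unfold logIntegrand
  rw [← setIntegral_Ioi_inv_smul_eq_smul_integral_comp_rpow hρ hρ₁, ← Ioi_inter_Iic,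
    ← setIntegral_indicator measurableSet_Iic]
  refine setIntegral_congr_fun measurableSet_Ioi fun a _ ↦ ?_
  simp only [indicator, mul_smul, smul_ite, smul_zero]

lemma sub_one_le_div_rpow (hρ : 0 < ρ) (hρ₁ : ρ ≤ exp (-1)) (v : ℝ) : v - 1 ≤ ρ / ρ ^ v := by
  rcases le_total v 1 with hv | hv
  · exact (sub_nonpos.2 hv).trans (by positivity)
  · calc v - 1 ≤ exp (v - 1) := (le_add_of_nonneg_right zero_le_one).trans (add_one_le_exp _)
      _ = exp (-1) ^ (1 - v) := by rw [← exp_mul]; ring_nf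
      _ ≤ ρ ^ (1 - v) := rpow_le_rpow_of_nonpos hρ hρ₁ (sub_nonpos.2 hv)
      _ = ρ / ρ ^ v := by rw [rpow_sub hρ, rpow_one]

lemma neg_one_lt_of_rpow_le {v : ℝ} (hρ : 0 < ρ) (hρ₁ : ρ ≤ 1) (hρt : t < ρ⁻¹) (hv : ρ ^ v ≤ t) :
    -1 < v := by
  by_contra! h
  have := rpow_le_rpow_of_exponent_ge hρ hρ₁ h
  rw [rpow_neg_one] at this
  exact (this.trans hv).not_gt hρt

lemma norm_logIntegrand_le (ht : 0 < t) (hρ : 0 < ρ) (hρ₁ : ρ ≤ exp (-1)) (hρt : t < ρ⁻¹)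
    (hf : ∀ a ∈ Ioc 0 t, ‖f a‖ ≤ M) (v : ℝ) :
    ‖logIntegrand t ρ f v‖ ≤ (Ioi (-1)).indicator (fun v ↦ exp (1 - v) * M) v := by
  have hM : 0 ≤ M := (norm_nonneg _).trans (hf t ⟨ht, le_rfl⟩)
  rw [logIntegrand]
  by_cases hvt : ρ ^ v ≤ t
  · have hv : -1 < v := neg_one_lt_of_rpow_le hρ (hρ₁.trans (by simp)) hρt hvt
    rw [indicator_of_mem (mem_Iic.2 hvt), indicator_of_mem (mem_Ioi.2 hv), norm_smul,
      norm_of_nonneg (exp_pos _).le, neg_div]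
    gcongr
    · linarith [sub_one_le_div_rpow hρ hρ₁ v]
    · exact hf _ ⟨rpow_pos_of_pos hρ v, hvt⟩
  · rw [indicator_of_notMem (by simpa using hvt), norm_zero]
    exact indicator_nonneg (fun v _ ↦ by positivity) v

lemma integrableOn_exp_one_sub_mul (c M : ℝ) :
    IntegrableOn (fun v ↦ exp (1 - v) * M) (Ioi c) := by
  simpa only [IntegrableOn, sub_eq_add_neg, exp_add] using
    ((integrableOn_exp_neg_Ioi c).const_mul (exp 1)).mul_const M

lemma norm_logAverage_le (ht : 0 < t) (hρ : 0 < ρ) (hρ₁ : ρ ≤ exp (-1)) (hρt : t < ρ⁻¹)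
    (hf : ∀ a ∈ Ioc 0 t, ‖f a‖ ≤ M) : ‖logAverage t ρ f‖ ≤ exp 2 * M := by
  have hρ_lt : ρ < 1 := hρ₁.trans_lt (by simp)
  have hint : ∫ v in Ioi (-1), exp (1 - v) * M = exp 2 * M := by
    simp only [sub_eq_add_neg, exp_add, integral_mul_const, integral_const_mul,
      integral_exp_neg_Ioi]
    rw [← exp_add]
    norm_num
  rw [logAverage_eq_integral_logIntegrand hρ hρ_lt.ne, ← hint,
    ← integral_indicator measurableSet_Ioi]
  exact norm_integral_le_of_norm_le
    ((integrableOn_exp_one_sub_mul _ _).integrable_indicator measurableSet_Ioi)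
    (ae_of_all _ (norm_logIntegrand_le ht hρ hρ₁ hρt hf))

lemma stronglyMeasurable_logIntegrand (hf : StronglyMeasurable f) (t ρ : ℝ) :
    StronglyMeasurable (logIntegrand t ρ f) := by
  have hexp : Measurable fun a : ℝ ↦ exp (-ρ / a) := by fun_prop
  exact ((hexp.stronglyMeasurable.smul hf).indicator measurableSet_Iic).comp_measurable
    (measurable_const.pow measurable_id)

lemma tendsto_rpow_nhdsGT_zero {v : ℝ} (hv : 0 < v) :
    Tendsto (fun ρ : ℝ ↦ ρ ^ v) (𝓝[>] 0) (𝓝[>] 0) := by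
  refine tendsto_nhdsWithin_iff.2 ⟨?_, ?_⟩
  · simpa [zero_rpow hv.ne'] using
      (continuousAt_rpow_const 0 v (Or.inr hv.le)).tendsto.mono_left nhdsWithin_le_nhds
  · filter_upwards [self_mem_nhdsWithin] with ρ hρ using rpow_pos_of_pos hρ v

lemma tendsto_exp_neg_div_rpow_of_lt {v : ℝ} (hv : v < 1) :
    Tendsto (fun ρ : ℝ ↦ exp (-ρ / ρ ^ v)) (𝓝[>] 0) (𝓝 1) := by
  have hpow := (tendsto_rpow_nhdsGT_zero (sub_pos.2 hv)).mono_right nhdsWithin_le_nhds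
  have hexp := (continuous_exp.tendsto _).comp hpow.neg
  rw [neg_zero, exp_zero] at hexp
  refine hexp.congr' ?_
  filter_upwards [self_mem_nhdsWithin] with ρ hρ
  rw [Function.comp_apply, rpow_sub hρ, rpow_one, neg_div]

lemma tendsto_exp_neg_div_rpow_of_gt {v : ℝ} (hv : 1 < v) :
    Tendsto (fun ρ : ℝ ↦ exp (-ρ / ρ ^ v)) (𝓝[>] 0) (𝓝 0) := by
  refine (tendsto_exp_neg_atTop_nhds_zero.comp
    (tendsto_rpow_neg_nhdsGT_zero (sub_neg.2 hv))).congr' ?_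
  filter_upwards [self_mem_nhdsWithin] with ρ hρ
  rw [Function.comp_apply, rpow_sub hρ, rpow_one, neg_div]

lemma eventually_pos_and_le_exp_and_lt_inv (t : ℝ) :
    ∀ᶠ ρ : ℝ in 𝓝[>] 0, 0 < ρ ∧ ρ ≤ exp (-1) ∧ t < ρ⁻¹ := by
  filter_upwards [Ioc_mem_nhdsGT (exp_pos (-1)), tendsto_inv_nhdsGT_zero.eventually_gt_atTop t]
    with ρ hρ hρt using ⟨hρ.1, hρ.2, hρt⟩

section Limit

variable {ι : Type*} {l : Filter ι} {ρ : ι → ℝ} {f : ι → ℝ → E} {c : E}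

lemma tendsto_logIntegrand (ht : 0 < t) (hρ : Tendsto ρ l (𝓝[>] 0))
    (hfc : Tendsto (Function.uncurry f) (l ×ˢ 𝓝[>] 0) (𝓝 c)) {v : ℝ} (hv₀ : v ≠ 0) (hv₁ : v ≠ 1) :
    Tendsto (fun i ↦ logIntegrand t (ρ i) (f i) v) l (𝓝 ((Ioo 0 1).indicator (fun _ ↦ c) v)) := by
  unfold logIntegrand
  rcases hv₀.lt_or_gt with hv | hv
  · rw [indicator_of_notMem fun h ↦ hv.not_gt h.1]
    refine tendsto_const_nhds.congr' ?_
    filter_upwards [((tendsto_rpow_neg_nhdsGT_zero hv).comp hρ).eventually_gt_atTop t] with i hi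
    exact (indicator_of_notMem (notMem_Iic.2 hi) _).symm
  have hpow : Tendsto (fun i ↦ ρ i ^ v) l (𝓝[>] 0) := (tendsto_rpow_nhdsGT_zero hv).comp hρ
  have hf : Tendsto (fun i ↦ f i (ρ i ^ v)) l (𝓝 c) := hfc.comp (tendsto_id.prodMk hpow)
  suffices h : Tendsto (fun i ↦ exp (-ρ i / ρ i ^ v) • f i (ρ i ^ v)) l
      (𝓝 ((Ioo 0 1).indicator (fun _ ↦ c) v)) by
    refine h.congr' ?_
    filter_upwards [hpow.eventually (Ioc_mem_nhdsGT ht)] with i hi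
    rw [indicator_of_mem (mem_Iic.2 hi.2)]
  rcases hv₁.lt_or_gt with hv₁ | hv₁
  · simpa [hv, hv₁] using ((tendsto_exp_neg_div_rpow_of_lt hv₁).comp hρ).smul hf
  · simpa [hv₁.not_gt] using ((tendsto_exp_neg_div_rpow_of_gt hv₁).comp hρ).smul hf

theorem tendsto_logAverage [CompleteSpace E] [l.IsCountablyGenerated] (ht : 0 < t)
    (hρ : Tendsto ρ l (𝓝[>] 0)) (hfm : ∀ᶠ i in l, StronglyMeasurable (f i))
    (hfM : ∀ᶠ i in l, ∀ a ∈ Ioc 0 t, ‖f i a‖ ≤ M)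
    (hfc : Tendsto (Function.uncurry f) (l ×ˢ 𝓝[>] 0) (𝓝 c)) :
    Tendsto (fun i ↦ logAverage t (ρ i) (f i)) l (𝓝 c) := by
  have hsmall : ∀ᶠ i in l, 0 < ρ i ∧ ρ i ≤ exp (-1) ∧ t < (ρ i)⁻¹ :=
    hρ.eventually (eventually_pos_and_le_exp_and_lt_inv t)
  have hlim : ∫ v, (Ioo (0 : ℝ) 1).indicator (fun _ ↦ c) v = c := by
    simp [integral_indicator measurableSet_Ioo]
  suffices h : Tendsto (fun i ↦ ∫ v, logIntegrand t (ρ i) (f i) v) l (𝓝 c) by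
    refine h.congr' ?_
    filter_upwards [hsmall] with i ⟨hpos, hle, _⟩
    exact (logAverage_eq_integral_logIntegrand hpos (hle.trans_lt (by simp)).ne t (f i)).symm
  rw [← hlim]
  refine tendsto_integral_filter_of_dominated_convergence _ ?_ ?_
    ((integrableOn_exp_one_sub_mul (-1) M).integrable_indicator measurableSet_Ioi) ?_
  · filter_upwards [hfm] with i hi
    exact (stronglyMeasurable_logIntegrand hi t (ρ i)).aestronglyMeasurable
  · filter_upwards [hsmall, hfM] with i ⟨hpos, hle, hlt⟩ hi
    exact ae_of_all _ (norm_logIntegrand_le ht hpos hle hlt hi)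
  · filter_upwards [Measure.ae_ne volume (0 : ℝ), Measure.ae_ne volume 1] with v hv₀ hv₁
    exact tendsto_logIntegrand ht hρ hfc hv₀ hv₁

end Limit

end LogAverage

section GaussDensity

open Real Set

variable {d : ℕ} {s t : ℝ}

lemma gaussDensity_nonneg (ht : 0 ≤ t) (x : EuclideanSpace ℝ (Fin d)) :
    0 ≤ gaussDensity d t x := by
  unfold gaussDensity; positivity

lemma gaussDensity_neg (t : ℝ) (x : EuclideanSpace ℝ (Fin d)) :
    gaussDensity d t (-x) = gaussDensity d t x := by
  simp only [gaussDensity, norm_neg]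

lemma measurable_uncurry_gaussDensity (d : ℕ) :
    Measurable (Function.uncurry (gaussDensity d)) := by
  unfold gaussDensity Function.uncurry; fun_prop

lemma continuousAt_uncurry_gaussDensity (ht : 0 < t) (x : EuclideanSpace ℝ (Fin d)) :
    ContinuousAt (Function.uncurry (gaussDensity d)) (t, x) := by
  have hpow : ContinuousAt (fun p : ℝ × EuclideanSpace ℝ (Fin d) ↦
      (2 * π * p.1) ^ (-(d : ℝ) / 2)) (t, x) :=
    ContinuousAt.rpow_const (by fun_prop) (Or.inl (by positivity))
  have hexp : ContinuousAt (fun p : ℝ × EuclideanSpace ℝ (Fin d) ↦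
      exp (-‖p.2‖ ^ 2 / (2 * p.1))) (t, x) :=
    (ContinuousAt.div (by fun_prop) (by fun_prop) (by positivity)).rexp
  exact hpow.mul hexp

lemma integral_gaussDensity (ht : 0 < t) : ∫ x, gaussDensity d t x = 1 := by
  have hgauss := GaussianFourier.integral_rexp_neg_mul_sq_norm
    (V := EuclideanSpace ℝ (Fin d)) (b := (2 * t)⁻¹) (by positivity)
  have hexp (x : EuclideanSpace ℝ (Fin d)) : -‖x‖ ^ 2 / (2 * t) = -(2 * t)⁻¹ * ‖x‖ ^ 2 := by ring
  simp only [gaussDensity, hexp]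
  rw [integral_const_mul, hgauss, finrank_euclideanSpace_fin, div_inv_eq_mul, neg_div,
    rpow_neg (by positivity), show π * (2 * t) = 2 * π * t by ring]
  exact inv_mul_cancel₀ (by positivity)

lemma gaussDensity_mul_gaussDensity (hs : 0 < s) (ht : 0 < t) (x y : EuclideanSpace ℝ (Fin d)) :
    gaussDensity d s x * gaussDensity d t y =
      gaussDensity d (s + t) (x + y) *
        gaussDensity d (s * t / (s + t)) ((s + t)⁻¹ • (t • x - s • y)) := by
  have hconst : (2 * π * s) * (2 * π * t) = (2 * π * (s + t)) * (2 * π * (s * t / (s + t))) := by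
    field_simp
  have hexp : -‖x‖ ^ 2 / (2 * s) + -‖y‖ ^ 2 / (2 * t) = -‖x + y‖ ^ 2 / (2 * (s + t)) +
      -‖(s + t)⁻¹ • (t • x - s • y)‖ ^ 2 / (2 * (s * t / (s + t))) := by
    rw [norm_smul, mul_pow, norm_sub_sq_real, norm_add_sq_real, norm_smul, norm_smul,
      real_inner_smul_left, real_inner_smul_right]
    simp only [norm_eq_abs, mul_pow, sq_abs]
    field_simp
    ring
  simp only [gaussDensity]
  rw [mul_mul_mul_comm, ← mul_rpow (by positivity) (by positivity), ← exp_add, hconst, hexp,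
    exp_add, mul_rpow (by positivity) (by positivity), mul_mul_mul_comm]

lemma integral_gaussDensity_mul_gaussDensity_sub (hs : 0 < s) (ht : 0 < t)
    (x : EuclideanSpace ℝ (Fin d)) :
    ∫ u, gaussDensity d s u * gaussDensity d t (x - u) = gaussDensity d (s + t) x := by
  have hcenter (u : EuclideanSpace ℝ (Fin d)) :
      (s + t)⁻¹ • (t • u - s • (x - u)) = u - (s / (s + t)) • x := by
    match_scalars <;> field_simp
    ring
  simp only [gaussDensity_mul_gaussDensity hs ht, add_sub_cancel, hcenter]
  rw [integral_const_mul, integral_sub_right_eq_self (gaussDensity d _),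
    integral_gaussDensity (by positivity), mul_one]

lemma gaussDensity_sub_mul_gaussDensity_sub (ht : 0 < t) (x y u : EuclideanSpace ℝ (Fin d)) :
    gaussDensity d t (x - u) * gaussDensity d t (y - u) =
      gaussDensity d (2 * t) (x - y) * gaussDensity d (t / 2) ((2 : ℝ)⁻¹ • (x + y) - u) := by
  have hmid : (t + t)⁻¹ • (t • (x - u) - t • (u - y)) = (2 : ℝ)⁻¹ • (x + y) - u := by
    match_scalars <;> field_simp <;> norm_num
  rw [← gaussDensity_neg t (y - u), neg_sub, gaussDensity_mul_gaussDensity ht ht, hmid,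
    sub_add_sub_cancel, ← two_mul, mul_div_mul_right _ _ ht.ne']

lemma gaussDensity_le_gaussDensity_zero (ht : 0 ≤ t) (x : EuclideanSpace ℝ (Fin d)) :
    gaussDensity d t x ≤ gaussDensity d t 0 := by
  unfold gaussDensity
  gcongr
  simp

lemma gaussDensity_le_mul_of_mem_Icc {σ : ℝ} (hs : 0 < s) (hσ : σ ∈ Icc s t)
    (x : EuclideanSpace ℝ (Fin d)) :
    gaussDensity d σ x ≤ (s / t) ^ (-(d : ℝ) / 2) * gaussDensity d t x := by
  obtain ⟨hsσ, hσt⟩ := hσ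
  have hσ_pos : 0 < σ := hs.trans_le hsσ
  have ht : 0 < t := hσ_pos.trans_le hσt
  have hd : -(d : ℝ) / 2 ≤ 0 := by rw [neg_div]; exact neg_nonpos.2 (by positivity)
  have hconst : (2 * π * σ) ^ (-(d : ℝ) / 2) ≤
      (s / t) ^ (-(d : ℝ) / 2) * (2 * π * t) ^ (-(d : ℝ) / 2) := by
    rw [← mul_rpow (by positivity) (by positivity)]
    refine rpow_le_rpow_of_nonpos (by positivity) ?_ hd
    calc s / t * (2 * π * t) = 2 * π * s := by field_simp
      _ ≤ 2 * π * σ := by gcongr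
  unfold gaussDensity
  rw [← mul_assoc]
  refine mul_le_mul hconst (exp_le_exp.2 ?_) (exp_pos _).le (by positivity)
  simp only [neg_div]
  gcongr

lemma gaussDensity_sub_le_mul (ht : 0 < t) (hts : t < s) (m u : EuclideanSpace ℝ (Fin d)) :
    gaussDensity d t (m - u) ≤
      gaussDensity d (t * (s - t) / s) 0 / gaussDensity d (s - t) m * gaussDensity d s u := by
  have hst : 0 < s - t := sub_pos.2 hts
  have hs : 0 < s := ht.trans hts
  have hm : 0 < gaussDensity d (s - t) m := by unfold gaussDensity; positivity
  have hprod := gaussDensity_mul_gaussDensity ht hst (u - m) m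
  rw [sub_add_cancel, add_sub_cancel] at hprod
  rw [← gaussDensity_neg, neg_sub, div_mul_eq_mul_div, le_div_iff₀ hm, hprod, mul_comm]
  exact mul_le_mul_of_nonneg_right (gaussDensity_le_gaussDensity_zero (by positivity) _)
    (gaussDensity_nonneg hs.le u)

lemma exists_eventually_forall_gaussDensity_sub_le_mul {r : ℝ} (hr : 0 < r) (ht : 0 < t)
    (hts : t < s) (x : EuclideanSpace ℝ (Fin d)) :
    ∃ C, ∀ᶠ m in 𝓝 x, ∀ σ ∈ Icc r t, ∀ u, gaussDensity d σ (m - u) ≤ C * gaussDensity d s u := by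
  have hst : 0 < s - t := sub_pos.2 hts
  have hs : 0 < s := ht.trans hts
  have hx : 0 < gaussDensity d (s - t) x := by unfold gaussDensity; positivity
  have hcont : ContinuousAt (gaussDensity d (s - t)) x :=
    (continuousAt_uncurry_gaussDensity hst x).comp (by fun_prop : ContinuousAt (Prod.mk (s - t)) x)
  set A := gaussDensity d (t * (s - t) / s) 0
  have hA : 0 ≤ A := gaussDensity_nonneg (by positivity) 0
  refine ⟨(r / t) ^ (-(d : ℝ) / 2) * (A / (gaussDensity d (s - t) x / 2)), ?_⟩
  filter_upwards [hcont.eventually_const_lt (half_lt_self hx)] with m hm σ hσ u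
  have hu : 0 ≤ gaussDensity d s u := gaussDensity_nonneg hs.le u
  calc gaussDensity d σ (m - u)
      ≤ (r / t) ^ (-(d : ℝ) / 2) * gaussDensity d t (m - u) :=
        gaussDensity_le_mul_of_mem_Icc hr hσ _
    _ ≤ (r / t) ^ (-(d : ℝ) / 2) * (A / gaussDensity d (s - t) m * gaussDensity d s u) := by
        gcongr; exact gaussDensity_sub_le_mul ht hts m u
    _ ≤ (r / t) ^ (-(d : ℝ) / 2) * (A / (gaussDensity d (s - t) x / 2) * gaussDensity d s u) := by
        gcongr
    _ = _ := (mul_assoc _ _ _).symm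

lemma gaussQ_eq (d : ℕ) (t : ℝ) (x y : EuclideanSpace ℝ (Fin d)) :
    gaussQ d t x y = 2 * ∫ a in Ioc 0 t,
      gaussDensity d (2 * a) (x - y) * gaussDensity d (t - a / 2) ((2 : ℝ)⁻¹ • (x + y)) := by
  have hinner {a : ℝ} (ha : a ∈ Ioo 0 t) :
      ∫ u, gaussDensity d (t - a) u * gaussDensity d a (x - u) * gaussDensity d a (y - u) =
        gaussDensity d (2 * a) (x - y) * gaussDensity d (t - a / 2) ((2 : ℝ)⁻¹ • (x + y)) := by
    simp only [mul_assoc, gaussDensity_sub_mul_gaussDensity_sub ha.1,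
      mul_left_comm _ (gaussDensity d (2 * a) (x - y))]
    rw [integral_const_mul, integral_gaussDensity_mul_gaussDensity_sub (sub_pos.2 ha.2)
      (half_pos ha.1), show t - a + a / 2 = t - a / 2 by ring]
  rcases lt_or_ge t 0 with ht | ht
  · simp [gaussQ, Ioc_eq_empty ht.not_gt]
  have hreflect := intervalIntegral.integral_comp_sub_left (a := 0) (b := t) (fun a ↦
    ∫ u, gaussDensity d (t - a) u * gaussDensity d a (x - u) * gaussDensity d a (y - u)) t
  simp only [sub_sub_cancel, sub_self, sub_zero, intervalIntegral.integral_of_le ht] at hreflect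
  rw [gaussQ, hreflect, integral_Ioc_eq_integral_Ioo, integral_Ioc_eq_integral_Ioo,
    setIntegral_congr_fun measurableSet_Ioo fun a ha ↦ hinner ha]

lemma gaussQ_nonneg (d : ℕ) (t : ℝ) (x y : EuclideanSpace ℝ (Fin d)) : 0 ≤ gaussQ d t x y := by
  refine mul_nonneg zero_le_two (setIntegral_nonneg measurableSet_Ioc fun s hs ↦
    integral_nonneg fun u ↦ ?_)
  have hts : 0 ≤ t - s := sub_nonneg.2 hs.2
  exact mul_nonneg (mul_nonneg (gaussDensity_nonneg hs.1.le _) (gaussDensity_nonneg hts _))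
    (gaussDensity_nonneg hts _)

lemma measurable_gaussQ_sub (d : ℕ) (t : ℝ) (x y : EuclideanSpace ℝ (Fin d)) :
    Measurable fun u ↦ gaussQ d t (x - u) (y - u) := by
  simp only [gaussQ_eq, sub_sub_sub_cancel_right]
  have hmeas : Measurable fun p : EuclideanSpace ℝ (Fin d) × ℝ ↦ gaussDensity d (2 * p.2) (x - y) *
      gaussDensity d (t - p.2 / 2) ((2 : ℝ)⁻¹ • (x - p.1 + (y - p.1))) := by
    unfold gaussDensity; fun_prop
  exact (hmeas.stronglyMeasurable.integral_prod_right'.const_mul 2).measurable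

end GaussDensity

section Midpoint

variable {V : Type*} [NormedAddCommGroup V] [NormedSpace ℝ V]

lemma tendsto_norm_half_sub_sq (x : V) :
    Tendsto (fun q : V × V ↦ ‖(2 : ℝ)⁻¹ • (q.1 - q.2)‖ ^ 2)
      (𝓝[{q | q.1 ≠ q.2}] (x, x)) (𝓝[>] 0) := by
  refine tendsto_nhdsWithin_iff.2 ⟨(Continuous.tendsto' (by fun_prop) _ _ (by simp)).mono_left
    nhdsWithin_le_nhds, ?_⟩
  filter_upwards [self_mem_nhdsWithin] with q hq
  have hsub : (2 : ℝ)⁻¹ • (q.1 - q.2) ≠ 0 := smul_ne_zero (by norm_num) (sub_ne_zero.2 hq)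
  exact pow_pos (norm_pos_iff.2 hsub) 2

lemma tendsto_half_add (x : V) :
    Tendsto (fun q : V × V ↦ (2 : ℝ)⁻¹ • (q.1 + q.2)) (𝓝 (x, x)) (𝓝 x) :=
  Continuous.tendsto' (by fun_prop) _ _ (by simp [← two_smul ℝ x])

end Midpoint

section DimTwo

open Real Set

variable {s t : ℝ}

lemma two_mul_gaussDensity_two_two_mul (a : ℝ) (x : EuclideanSpace ℝ (Fin 2)) :
    2 * gaussDensity 2 (2 * a) x = (2 * π)⁻¹ * (a⁻¹ * exp (-‖(2 : ℝ)⁻¹ • x‖ ^ 2 / a)) := by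
  have hexp : -‖x‖ ^ 2 / (2 * (2 * a)) = -‖(2 : ℝ)⁻¹ • x‖ ^ 2 / a := by
    rw [norm_smul, norm_of_nonneg (by norm_num)]
    ring
  rw [gaussDensity, hexp, show -((2 : ℕ) : ℝ) / 2 = -1 by norm_num, rpow_neg_one]
  simp only [mul_inv]
  ring

lemma gaussQ_two_div_abs_log (t : ℝ) (x y : EuclideanSpace ℝ (Fin 2)) :
    gaussQ 2 t x y / |log ‖(2 : ℝ)⁻¹ • (x - y)‖| = π⁻¹ * logAverage t (‖(2 : ℝ)⁻¹ • (x - y)‖ ^ 2)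
      fun a ↦ gaussDensity 2 (t - a / 2) ((2 : ℝ)⁻¹ • (x + y)) := by
  rw [gaussQ_eq, ← integral_const_mul]
  simp only [← mul_assoc, two_mul_gaussDensity_two_two_mul]
  simp only [mul_assoc, integral_const_mul, logAverage, smul_eq_mul, log_pow, abs_mul, mul_inv,
    Nat.cast_ofNat, Nat.abs_ofNat]
  ring

lemma sub_half_mem_Icc {a : ℝ} (ha : a ∈ Ioc 0 t) : t - a / 2 ∈ Icc (t / 2) t :=
  ⟨by linarith [ha.2], by linarith [ha.1]⟩

lemma tendsto_gaussQ_two_div_abs_log (ht : 0 < t) (x : EuclideanSpace ℝ (Fin 2)) :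
    Tendsto (fun q : EuclideanSpace ℝ (Fin 2) × EuclideanSpace ℝ (Fin 2) ↦
      gaussQ 2 t q.1 q.2 / |log ‖(2 : ℝ)⁻¹ • (q.1 - q.2)‖|)
      (𝓝[{q | q.1 ≠ q.2}] (x, x)) (𝓝 (π⁻¹ * gaussDensity 2 t x)) := by
  simp only [gaussQ_two_div_abs_log]
  obtain ⟨C, hC⟩ := exists_eventually_forall_gaussDensity_sub_le_mul (half_pos ht) ht
    (lt_two_mul_self ht) x
  refine (tendsto_logAverage (M := C * gaussDensity 2 (2 * t) 0) ht (tendsto_norm_half_sub_sq x)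
    (Eventually.of_forall fun q ↦ ?_) ?_ ?_).const_mul π⁻¹
  · exact ((measurable_uncurry_gaussDensity 2).comp (by fun_prop :
      Measurable fun a : ℝ ↦ (t - a / 2, (2 : ℝ)⁻¹ • (q.1 + q.2)))).stronglyMeasurable
  · filter_upwards [nhdsWithin_le_nhds ((tendsto_half_add x).eventually hC)] with q hq a ha
    have hσ := sub_half_mem_Icc ha
    rw [norm_of_nonneg (gaussDensity_nonneg ((half_pos ht).le.trans hσ.1) _)]
    simpa using hq _ hσ 0
  · have hvar : Tendsto (fun a : ℝ ↦ t - a / 2) (𝓝[>] 0) (𝓝 t) :=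
      (Continuous.tendsto' (by fun_prop) _ _ (by simp)).mono_left nhdsWithin_le_nhds
    have hmid := (tendsto_half_add x).mono_left (nhdsWithin_le_nhds (s := {q | q.1 ≠ q.2}))
    have hpair := (hvar.comp tendsto_snd).prodMk_nhds (hmid.comp tendsto_fst)
    exact Tendsto.comp (f := fun p : (EuclideanSpace ℝ (Fin 2) × EuclideanSpace ℝ (Fin 2)) × ℝ ↦
      (t - p.2 / 2, (2 : ℝ)⁻¹ • (p.1.1 + p.1.2)))
      (continuousAt_uncurry_gaussDensity ht x) hpair

lemma tendsto_gaussQ_two_sub_div_abs_log (ht : 0 < t) (x u : EuclideanSpace ℝ (Fin 2)) :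
    Tendsto (fun q : EuclideanSpace ℝ (Fin 2) × EuclideanSpace ℝ (Fin 2) ↦
      gaussQ 2 t (q.1 - u) (q.2 - u) / |log ‖(2 : ℝ)⁻¹ • (q.1 - q.2)‖|)
      (𝓝[{q | q.1 ≠ q.2}] (x, x)) (𝓝 (π⁻¹ * gaussDensity 2 t (x - u))) := by
  have htrans : Tendsto (fun q : EuclideanSpace ℝ (Fin 2) × EuclideanSpace ℝ (Fin 2) ↦
      (q.1 - u, q.2 - u)) (𝓝[{q | q.1 ≠ q.2}] (x, x)) (𝓝[{q | q.1 ≠ q.2}] (x - u, x - u)) :=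
    ContinuousWithinAt.tendsto_nhdsWithin (by fun_prop) fun q hq ↦ by simpa using hq
  simpa [Function.comp_def] using (tendsto_gaussQ_two_div_abs_log ht (x - u)).comp htrans

lemma exists_eventually_forall_gaussQ_two_sub_div_abs_log_le (ht : 0 < t) (hts : t < s)
    (x : EuclideanSpace ℝ (Fin 2)) :
    ∃ C, ∀ᶠ q : EuclideanSpace ℝ (Fin 2) × EuclideanSpace ℝ (Fin 2) in
      𝓝[{q | q.1 ≠ q.2}] (x, x), ∀ u,
        gaussQ 2 t (q.1 - u) (q.2 - u) / |log ‖(2 : ℝ)⁻¹ • (q.1 - q.2)‖| ≤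
          C * gaussDensity 2 s u := by
  obtain ⟨C, hC⟩ := exists_eventually_forall_gaussDensity_sub_le_mul (half_pos ht) ht hts x
  refine ⟨π⁻¹ * (exp 2 * C), ?_⟩
  filter_upwards [nhdsWithin_le_nhds ((tendsto_half_add x).eventually hC),
    (tendsto_norm_half_sub_sq x).eventually (eventually_pos_and_le_exp_and_lt_inv t)]
    with q hq ⟨hpos, hle, hlt⟩ u
  have hmid : (2 : ℝ)⁻¹ • (q.1 - u + (q.2 - u)) = (2 : ℝ)⁻¹ • (q.1 + q.2) - u := by module
  rw [← sub_sub_sub_cancel_right q.1 q.2 u, gaussQ_two_div_abs_log, sub_sub_sub_cancel_right, hmid,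
    mul_assoc, mul_assoc]
  gcongr
  refine (le_norm_self _).trans (norm_logAverage_le ht hpos hle hlt fun a ha ↦ ?_)
  have hσ := sub_half_mem_Icc ha
  rw [norm_of_nonneg (gaussDensity_nonneg ((half_pos ht).le.trans hσ.1) _)]
  exact hq _ hσ u

end DimTwo

theorem tendsto_integral_gaussQ_two_div_abs_log {μ : Measure (EuclideanSpace ℝ (Fin 2))} {s t : ℝ}
    (ht : 0 < t) (hts : t < s) (hμ : Integrable (gaussDensity 2 s) μ)
    (x : EuclideanSpace ℝ (Fin 2)) :
    Tendsto
      (fun q : EuclideanSpace ℝ (Fin 2) × EuclideanSpace ℝ (Fin 2) ↦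
        (∫ u, gaussQ 2 t (q.1 - u) (q.2 - u) ∂μ) / |Real.log ‖(2 : ℝ)⁻¹ • (q.1 - q.2)‖|)
      (𝓝[{q | q.1 ≠ q.2}] (x, x)) (𝓝 (Real.pi⁻¹ * ∫ u, gaussDensity 2 t (x - u) ∂μ)) := by
  obtain ⟨C, hC⟩ := exists_eventually_forall_gaussQ_two_sub_div_abs_log_le ht hts x
  simp only [← integral_div, ← integral_const_mul]
  refine tendsto_integral_filter_of_dominated_convergence (fun u ↦ C * gaussDensity 2 s u)
    (Eventually.of_forall fun q ↦ ?_) ?_ (hμ.const_mul C)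
    (ae_of_all _ (tendsto_gaussQ_two_sub_div_abs_log ht x))
  · exact ((measurable_gaussQ_sub 2 t q.1 q.2).div_const _).aestronglyMeasurable
  · filter_upwards [hC] with q hq
    refine ae_of_all _ fun u ↦ ?_
    rw [Real.norm_of_nonneg (div_nonneg (gaussQ_nonneg _ _ _ _) (abs_nonneg _))]
    exact hq u

theorem gaussQ_conv_asymptotics_dim_two_general {μ : Measure (EuclideanSpace ℝ (Fin 2))} {s t : ℝ}
    (ht : 0 < t) (hts : t < s) (hμ : ∫⁻ u, ENNReal.ofReal (gaussDensity 2 s u) ∂μ < ⊤)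
    (x : EuclideanSpace ℝ (Fin 2)) :
    Tendsto
      (fun q : EuclideanSpace ℝ (Fin 2) × EuclideanSpace ℝ (Fin 2) ↦
        (∫⁻ u, ENNReal.ofReal (gaussQ 2 t (q.1 - u) (q.2 - u)) ∂μ).toReal /
          |Real.log ‖(2 : ℝ)⁻¹ • (q.1 - q.2)‖|)
      (𝓝[{q | q.1 ≠ q.2}] (x, x))
      (𝓝 (Real.pi⁻¹ * (∫⁻ u, ENNReal.ofReal (gaussDensity 2 t (x - u)) ∂μ).toReal)) := by
  have hmeas (r : ℝ) : Measurable (gaussDensity 2 r) :=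
    (measurable_uncurry_gaussDensity 2).of_uncurry_left
  have hint : Integrable (gaussDensity 2 s) μ :=
    (lintegral_ofReal_ne_top_iff_integrable (hmeas s).aestronglyMeasurable
      (ae_of_all _ (gaussDensity_nonneg (ht.trans hts).le))).1 hμ.ne
  have hgaussQ (y z : EuclideanSpace ℝ (Fin 2)) :=
    integral_eq_lintegral_of_nonneg_ae (ae_of_all μ fun u ↦ gaussQ_nonneg 2 t (y - u) (z - u))
      (measurable_gaussQ_sub 2 t y z).aestronglyMeasurable
  have hdensity := integral_eq_lintegral_of_nonneg_ae
    (ae_of_all μ fun u ↦ gaussDensity_nonneg ht.le (x - u))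
    ((hmeas t).comp (measurable_const.sub measurable_id)).aestronglyMeasurable
  simpa only [hgaussQ, hdensity] using tendsto_integral_gaussQ_two_div_abs_log ht hts hint x

/-- **Lemma 3.3(iv).** There is a universal constant `c > 0` such that for every σ-finite
`μ` on `ℝ²` with `μ p_s < ∞` for all `s > 0`, every `t > 0` and every `x ∈ ℝ²`, one has
`(μ * q_t)(x₁, x₂) / |log |r|| → c (μ * p_t)(x)` as `x₁, x₂ → x` with `x₁ ≠ x₂`,
where `r = (x₁ - x₂)/2`. -/
theorem gaussQ_conv_asymptotics_dim_two :
    ∃ c : ℝ, 0 < c ∧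
      ∀ (μ : Measure (EuclideanSpace ℝ (Fin 2))), SigmaFinite μ →
      (∀ s : ℝ, 0 < s → ∫⁻ u, ENNReal.ofReal (gaussDensity 2 s u) ∂μ < ⊤) →
      ∀ t : ℝ, 0 < t → ∀ x : EuclideanSpace ℝ (Fin 2),
      Tendsto
        (fun q : EuclideanSpace ℝ (Fin 2) × EuclideanSpace ℝ (Fin 2) =>
          (∫⁻ u, ENNReal.ofReal (gaussQ 2 t (q.1 - u) (q.2 - u)) ∂μ).toReal /
            |Real.log ‖(2:ℝ)⁻¹ • (q.1 - q.2)‖|)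
        (nhdsWithin (x, x)
          {q : EuclideanSpace ℝ (Fin 2) × EuclideanSpace ℝ (Fin 2) | q.1 ≠ q.2})
        (nhds (c * (∫⁻ u, ENNReal.ofReal (gaussDensity 2 t (x - u)) ∂μ).toReal)) := by
  exact ⟨Real.pi⁻¹, by positivity, fun μ _ hμ t ht x ↦
    gaussQ_conv_asymptotics_dim_two_general ht (lt_two_mul_self ht) (hμ (2 * t) (by positivity)) x⟩
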